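/- Let x be a rational number with 0 < x < 1 and F(x) = x/(1+x). If 0 < x ≤ 1/2 then H(x) = (1 + x)·H(F(x)); if 1/2 ≤ x < 1 then H(x) = (1 + x)·H(F(x)) − x·ln x + (2x − 1)·ln(2x − 1) + (1 − x)·ln(1 − x). (Note F(x) ≤ 1/3 < 1/2, so H(F(x)) is given by the first branch of the definition of H.) -/

import Mathlib

/-- Symbols for paths in the Farey binary tree. -/
inductive LR
  | L
  | R
deriving DecidableEq

/-- One step in the Farey binary tree: update the current pair of fractions
(represented as pairs (numerator, denominator) of naturals). -/
def fareyStep : ((ℕ × ℕ) × (ℕ × ℕ)) → LR → ((ℕ × ℕ) × (ℕ × ℕ))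
  | ((a, b), (c, d)), LR.L => ((a, b), (a + c, b + d))
  | ((a, b), (c, d)), LR.R => ((a + c, b + d), (c, d))

/-- The final pair of fractions of a word: after reading the first symbol `L`
the current pair is (0/1, 1/1); the remaining symbols update it. -/
def finalPair (w : List LR) : (ℕ × ℕ) × (ℕ × ℕ) :=
  w.tail.foldl fareyStep ((0, 1), (1, 1))

/-- The value ⟨w⟩ of a word: the mediant of its final pair, as (numerator, denominator). -/
def value (w : List LR) : ℕ × ℕ :=
  ((finalPair w).1.1 + (finalPair w).2.1, (finalPair w).1.2 + (finalPair w).2.2)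

/-- A word over {L,R} is a Farey word when its first symbol is `L`. -/
def IsFareyWord (w : List LR) : Prop := w.head? = some LR.L

/-- Concatenation of degree sequences:
[a₁,…,a_s] ⊕ [b₁,…,b_t] = [a₁+1, a₂, …, a_{s−1}, a_s+b₁, b₂, …, b_{t−1}, b_t+1]. -/
def oplus (A B : List ℕ) : List ℕ :=
  (A.dropLast.modifyHead (· + 1)) ++ [A.getLastD 0 + B.headD 0] ++ B.tail.dropLast
    ++ [B.getLastD 0 + 1]

/-- Update of the pair (D(left ancestor), D(right ancestor)) of unreduced degree
sequences along one symbol. -/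
def degStep : (List ℕ × List ℕ) → LR → (List ℕ × List ℕ)
  | (A, B), LR.L => (A, oplus A B)
  | (A, B), LR.R => (oplus A B, B)

/-- The pair (D(a/b), D(c/d)) of unreduced degree sequences of the final pair of a word;
0/1 and 1/1 are both assigned the list [1,1]. -/
def degPair (w : List LR) : List ℕ × List ℕ :=
  w.tail.foldl degStep ([1, 1], [1, 1])

/-- The unreduced degree sequence D(⟨w⟩) = D(a/b) ⊕ D(c/d) of the value of a word. -/
def Dseq (w : List LR) : List ℕ :=
  oplus (degPair w).1 (degPair w).2

/-- Reduction: [k₁,…,k_{q+1}] becomes [k₂,…,k_q, k₁+k_{q+1}]; the last entry is the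
boundary degree and the remaining ones are the inner degrees. -/
def reduce (D : List ℕ) : List ℕ :=
  D.tail.dropLast ++ [D.headD 0 + D.getLastD 0]

/-- The reduced degree sequence of the Haros graph G_{⟨w⟩}. -/
def degSeq (w : List LR) : List ℕ := reduce (Dseq w)

/-- Degree-distribution entropy S of the Haros graph G_{⟨w⟩}:
S = −Σ_k P(k)·ln P(k), summed over the degree values occurring in the reduced
degree sequence, where P(k) = m(k)/q. -/
noncomputable def Sent (w : List LR) : ℝ :=
  -∑ k ∈ (degSeq w).toFinset,
    (((degSeq w).count k : ℝ) / ((value w).2 : ℝ)) *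
      Real.log (((degSeq w).count k : ℝ) / ((value w).2 : ℝ))

/-- Reduced entropy H of the Haros graph G_{⟨w⟩} (with the convention 0·ln 0 = 0,
automatic since Real.log 0 = 0). -/
noncomputable def Hent (w : List LR) : ℝ :=
  let x : ℝ := ((value w).1 : ℝ) / ((value w).2 : ℝ)
  if x ≤ 1 / 2 then
    Sent w + 2 * x * Real.log x + (1 - 2 * x) * Real.log (1 - 2 * x)
  else
    Sent w + 2 * (1 - x) * Real.log (1 - x) + (2 * x - 1) * Real.log (2 * x - 1)

/-- The list `D` has first entry `a`, last entry `b`, and the entries in between form the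
multiset `I`. -/
def HasProfile (D : List ℕ) (a : ℕ) (I : Multiset ℕ) (b : ℕ) : Prop :=
  ∃ l : List ℕ, D = a :: (l ++ [b]) ∧ (l : Multiset ℕ) = I

theorem HasProfile.mediant {A B : List ℕ} {a b c d : ℕ} {I J : Multiset ℕ}
    (hA : HasProfile A a I b) (hB : HasProfile B c J d) :
    HasProfile (oplus A B) (a + 1) (I + J + {b + c}) (d + 1) := by
  obtain ⟨l, rfl, rfl⟩ := hA
  obtain ⟨m, rfl, rfl⟩ := hB
  refine ⟨l ++ [b + c] ++ m, ?_, ?_⟩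
  · have h₁ : (a :: (l ++ [b])).dropLast = a :: l := by
      rw [← List.cons_append, List.dropLast_concat]
    have h₂ : (a :: (l ++ [b])).getLastD 0 = b := by
      rw [← List.cons_append, List.getLastD_concat]
    have h₃ : (c :: (m ++ [d])).getLastD 0 = d := by
      rw [← List.cons_append, List.getLastD_concat]
    simp only [oplus, h₁, h₂, h₃]
    simp
  · simp only [← Multiset.coe_add, Multiset.coe_singleton]
    abel

theorem HasProfile.coe_reduce {D : List ℕ} {a b : ℕ} {I : Multiset ℕ}
    (h : HasProfile D a I b) : (reduce D : Multiset ℕ) = I + {a + b} := by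
  obtain ⟨l, rfl, rfl⟩ := h
  have h₂ : (a :: (l ++ [b])).getLastD 0 = b := by
    rw [← List.cons_append, List.getLastD_concat]
  simp only [reduce, h₂, List.tail_cons, List.dropLast_concat, List.headD_cons,
    ← Multiset.coe_add, Multiset.coe_singleton]

theorem hasProfile_endpoint : HasProfile [1, 1] 1 0 1 := ⟨[], rfl, rfl⟩

theorem hasProfile_half : HasProfile [2, 2, 2] 2 {2} 2 := ⟨[2], rfl, rfl⟩

theorem hasProfile_third : HasProfile [2, 3, 2, 3] 2 ({2} + {3}) 3 :=
  ⟨[3, 2], rfl, by decide⟩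

/-- The degree sequences `D` of a fraction `v ∈ (0, 1/2]` and `D'` of its image under
`x ↦ x / (1 + x)` are described by the end degrees `a`, `b`, the number `r` of inner degrees
`3` and the multiset `J` of larger inner degrees of `D`. -/
structure LowNode (a b r : ℕ) (J : Multiset ℕ) (v : ℕ × ℕ) (D D' : List ℕ) : Prop where
  two_le_left : 2 ≤ a
  two_le_right : 2 ≤ b
  profile : HasProfile D a (Multiset.replicate v.1 2 + Multiset.replicate r 3 + J) b
  profile_image : HasProfile D' a (Multiset.replicate v.1 2 +
    Multiset.replicate (v.1 + r) 3 + J.map (· + 1)) (b + 1)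
  four_le : ∀ k ∈ J, 4 ≤ k
  count_three : r + 2 * v.1 = v.2
  card_inner : v.1 + r + J.card + 1 = v.2

theorem lowNode_half : LowNode 2 2 0 0 (1, 2) [2, 2, 2] [2, 3, 2, 3] where
  two_le_left := le_rfl
  two_le_right := le_rfl
  profile := by simpa using hasProfile_half
  profile_image := by simpa using hasProfile_third
  four_le := by simp
  count_three := rfl
  card_inner := rfl

theorem LowNode.mediant {a b r c d t : ℕ} {I J : Multiset ℕ} {v u : ℕ × ℕ}
    {A A' B B' : List ℕ} (hA : LowNode a b r I v A A') (hB : LowNode c d t J u B B') :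
    LowNode (a + 1) (d + 1) (r + t) (I + J + {b + c}) (v.1 + u.1, v.2 + u.2)
      (oplus A B) (oplus A' B') where
  two_le_left := by have := hA.two_le_left; omega
  two_le_right := by have := hB.two_le_right; omega
  profile := by
    convert hA.profile.mediant hB.profile using 1
    simp only [Multiset.replicate_add]
    abel
  profile_image := by
    convert hA.profile_image.mediant hB.profile_image using 1
    have : b + c + 1 = b + 1 + c := by omega
    simp only [Multiset.replicate_add, Multiset.map_add, Multiset.map_singleton, this]
    abel
  four_le := by
    have h₁ := hA.two_le_right
    have h₂ := hB.two_le_left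
    intro k hk
    simp only [Multiset.mem_add, Multiset.mem_singleton] at hk
    rcases hk with (hk | hk) | rfl
    · exact hA.four_le k hk
    · exact hB.four_le k hk
    · omega
  count_three := by
    have := hA.count_three
    have := hB.count_three
    dsimp only
    omega
  card_inner := by
    have := hA.card_inner
    have := hB.card_inner
    simp only [Multiset.card_add, Multiset.card_singleton]
    omega

theorem LowNode.zero_oplus {d t : ℕ} {J : Multiset ℕ} {u : ℕ × ℕ} {B B' : List ℕ}
    (hB : LowNode 2 d t J u B B') :
    LowNode 2 (d + 1) (t + 1) J (0 + u.1, 1 + u.2) (oplus [1, 1] B) (oplus [1, 1] B') where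
  two_le_left := le_rfl
  two_le_right := by have := hB.two_le_right; omega
  profile := by
    convert hasProfile_endpoint.mediant hB.profile using 1
    simp only [Multiset.replicate_add, Multiset.replicate_one, Nat.reduceAdd,
      Multiset.replicate_zero]
    abel
  profile_image := by
    convert hasProfile_endpoint.mediant hB.profile_image using 1
    simp only [Multiset.replicate_add, Multiset.replicate_one, Nat.reduceAdd,
      Multiset.replicate_zero]
    abel
  four_le := hB.four_le
  count_three := by
    have := hB.count_three
    dsimp only
    omega
  card_inner := by
    have := hB.card_inner
    dsimp only
    omega

/-- The states reached along a Farey path inside `(0, 1/2)`. -/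
def LowState (f : (ℕ × ℕ) × (ℕ × ℕ)) (d d' : List ℕ × List ℕ) : Prop :=
  (f.1 = (0, 1) ∧ d.1 = [1, 1] ∧ d'.1 = [1, 1] ∧ ∃ b r J, LowNode 2 b r J f.2 d.2 d'.2) ∨
    ((∃ a b r J, LowNode a b r J f.1 d.1 d'.1) ∧ ∃ a b r J, LowNode a b r J f.2 d.2 d'.2)

theorem LowState.step {f : (ℕ × ℕ) × (ℕ × ℕ)} {d d' : List ℕ × List ℕ}
    (h : LowState f d d') (s : LR) :
    LowState (fareyStep f s) (degStep d s) (degStep d' s) := by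
  obtain ⟨⟨a, b⟩, c, e⟩ := f
  obtain ⟨A, B⟩ := d
  obtain ⟨A', B'⟩ := d'
  rcases h with ⟨h, rfl, rfl, _, _, _, hB⟩ | ⟨⟨_, _, _, _, hA⟩, _, _, _, _, hB⟩
  · obtain ⟨rfl, rfl⟩ : a = 0 ∧ b = 1 := by simpa using h
    cases s
    · exact Or.inl ⟨rfl, rfl, rfl, _, _, _, hB.zero_oplus⟩
    · exact Or.inr ⟨⟨_, _, _, _, hB.zero_oplus⟩, _, _, _, _, hB⟩
  · cases s
    · exact Or.inr ⟨⟨_, _, _, _, hA⟩, _, _, _, _, hA.mediant hB⟩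
    · exact Or.inr ⟨⟨_, _, _, _, hA.mediant hB⟩, _, _, _, _, hB⟩

theorem LowState.foldl {f : (ℕ × ℕ) × (ℕ × ℕ)} {d d' : List ℕ × List ℕ}
    (h : LowState f d d') (u : List LR) :
    LowState (u.foldl fareyStep f) (u.foldl degStep d) (u.foldl degStep d') := by
  induction u generalizing f d d' with
  | nil => exact h
  | cons s u ih => exact ih (h.step s)

theorem LowState.mediant {f : (ℕ × ℕ) × (ℕ × ℕ)} {d d' : List ℕ × List ℕ}
    (h : LowState f d d') :
    ∃ a b r J, LowNode a b r J (f.1.1 + f.2.1, f.1.2 + f.2.2)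
      (oplus d.1 d.2) (oplus d'.1 d'.2) := by
  rcases h with ⟨h, h₁, h₂, _, _, _, hB⟩ | ⟨⟨_, _, _, _, hA⟩, _, _, _, _, hB⟩
  · rw [h, h₁, h₂]
    exact ⟨_, _, _, _, hB.zero_oplus⟩
  · exact ⟨_, _, _, _, hA.mediant hB⟩

/-- The degree sequences `D` of a fraction `v ∈ [1/2, 1)` and `D'` of its image under
`x ↦ x / (1 + x)` are described by the end degrees `a`, `b`, the numbers `s`, `r` of inner
degrees `2`, `3` and the multiset `J` of larger inner degrees of `D`. -/
structure HighNode (a b s r : ℕ) (J : Multiset ℕ) (v : ℕ × ℕ) (D D' : List ℕ) : Prop where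
  two_le_left : 2 ≤ a
  two_le_right : 2 ≤ b
  profile : HasProfile D a (Multiset.replicate s 2 + Multiset.replicate r 3 + J) b
  profile_image : HasProfile D' a (Multiset.replicate (s + r) 2 +
    Multiset.replicate s 3 + (Multiset.replicate r 5 + J.map (· + 1))) (b + 1)
  five_le : ∀ k ∈ J, 5 ≤ k
  count_two : s + v.1 = v.2
  count_three : r + v.2 = 2 * v.1
  card_inner : s + r + J.card + 1 = v.2

theorem highNode_half : HighNode 2 2 1 0 0 (1, 2) [2, 2, 2] [2, 3, 2, 3] where
  two_le_left := le_rfl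
  two_le_right := le_rfl
  profile := by simpa using hasProfile_half
  profile_image := by simpa using hasProfile_third
  five_le := by simp
  count_two := rfl
  count_three := rfl
  card_inner := rfl

theorem HighNode.mediant {a b s r c d i t : ℕ} {I J : Multiset ℕ} {v u : ℕ × ℕ}
    {A A' B B' : List ℕ} (hA : HighNode a b s r I v A A') (hB : HighNode c d i t J u B B')
    (hc : 3 ≤ c) :
    HighNode (a + 1) (d + 1) (s + i) (r + t) (I + J + {b + c}) (v.1 + u.1, v.2 + u.2)
      (oplus A B) (oplus A' B') where
  two_le_left := by have := hA.two_le_left; omega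
  two_le_right := by have := hB.two_le_right; omega
  profile := by
    convert hA.profile.mediant hB.profile using 1
    simp only [Multiset.replicate_add]
    abel
  profile_image := by
    convert hA.profile_image.mediant hB.profile_image using 1
    have : b + c + 1 = b + 1 + c := by omega
    simp only [Multiset.replicate_add, Multiset.map_add, Multiset.map_singleton, this]
    abel
  five_le := by
    have h₁ := hA.two_le_right
    intro k hk
    simp only [Multiset.mem_add, Multiset.mem_singleton] at hk
    rcases hk with (hk | hk) | rfl
    · exact hA.five_le k hk
    · exact hB.five_le k hk
    · omega
  count_two := by
    have := hA.count_two
    have := hB.count_two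
    dsimp only
    omega
  count_three := by
    have := hA.count_three
    have := hB.count_three
    dsimp only
    omega
  card_inner := by
    have := hA.card_inner
    have := hB.card_inner
    simp only [Multiset.card_add, Multiset.card_singleton]
    omega

theorem HighNode.oplus_one {a s r : ℕ} {J : Multiset ℕ} {v : ℕ × ℕ} {A A' : List ℕ}
    (hA : HighNode a 2 s r J v A A') :
    HighNode (a + 1) 2 s (r + 1) J (v.1 + 1, v.2 + 1) (oplus A [1, 1])
      (oplus A' [2, 2, 2]) where
  two_le_left := by have := hA.two_le_left; omega
  two_le_right := le_rfl
  profile := by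
    convert hA.profile.mediant hasProfile_endpoint using 1
    simp only [Multiset.replicate_add, Multiset.replicate_one, Nat.reduceAdd]
    abel
  profile_image := by
    convert hA.profile_image.mediant hasProfile_half using 1
    simp only [Multiset.replicate_add, Multiset.replicate_one, Nat.reduceAdd]
    abel
  five_le := hA.five_le
  count_two := by
    have := hA.count_two
    dsimp only
    omega
  count_three := by
    have := hA.count_three
    dsimp only
    omega
  card_inner := by
    have := hA.card_inner
    dsimp only
    omega

/-- The states reached along a Farey path inside `(1/2, 1)`. -/
def HighState (f : (ℕ × ℕ) × (ℕ × ℕ)) (d d' : List ℕ × List ℕ) : Prop :=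
  (f.2 = (1, 1) ∧ d.2 = [1, 1] ∧ d'.2 = [2, 2, 2] ∧
      ∃ a s r J, HighNode a 2 s r J f.1 d.1 d'.1) ∨
    ((∃ a b s r J, HighNode a b s r J f.1 d.1 d'.1) ∧
      ∃ a b s r J, 3 ≤ a ∧ HighNode a b s r J f.2 d.2 d'.2)

theorem HighState.step {f : (ℕ × ℕ) × (ℕ × ℕ)} {d d' : List ℕ × List ℕ}
    (h : HighState f d d') (s : LR) :
    HighState (fareyStep f s) (degStep d s) (degStep d' s) := by
  obtain ⟨⟨a, b⟩, c, e⟩ := f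
  obtain ⟨A, B⟩ := d
  obtain ⟨A', B'⟩ := d'
  rcases h with ⟨h, rfl, rfl, _, _, _, _, hA⟩ |
    ⟨⟨_, _, _, _, _, hA⟩, _, _, _, _, _, h₃, hB⟩
  · obtain ⟨rfl, rfl⟩ : c = 1 ∧ e = 1 := by simpa using h
    cases s
    · exact Or.inr ⟨⟨_, _, _, _, _, hA⟩, _, _, _, _, _,
        Nat.succ_le_succ hA.two_le_left, hA.oplus_one⟩
    · exact Or.inl ⟨rfl, rfl, rfl, _, _, _, _, hA.oplus_one⟩
  · cases s
    · exact Or.inr ⟨⟨_, _, _, _, _, hA⟩, _, _, _, _, _,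
        Nat.succ_le_succ hA.two_le_left, hA.mediant hB h₃⟩
    · exact Or.inr ⟨⟨_, _, _, _, _, hA.mediant hB h₃⟩, _, _, _, _, _, h₃, hB⟩

theorem HighState.foldl {f : (ℕ × ℕ) × (ℕ × ℕ)} {d d' : List ℕ × List ℕ}
    (h : HighState f d d') (u : List LR) :
    HighState (u.foldl fareyStep f) (u.foldl degStep d) (u.foldl degStep d') := by
  induction u generalizing f d d' with
  | nil => exact h
  | cons s u ih => exact ih (h.step s)

theorem HighState.mediant {f : (ℕ × ℕ) × (ℕ × ℕ)} {d d' : List ℕ × List ℕ}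
    (h : HighState f d d') :
    ∃ a b s r J, 3 ≤ a ∧ HighNode a b s r J (f.1.1 + f.2.1, f.1.2 + f.2.2)
      (oplus d.1 d.2) (oplus d'.1 d'.2) := by
  rcases h with ⟨h, h₁, h₂, _, _, _, _, hA⟩ | ⟨⟨_, _, _, _, _, hA⟩, _, _, _, _, _, h₃, hB⟩
  · rw [h, h₁, h₂]
    exact ⟨_, _, _, _, _, Nat.succ_le_succ hA.two_le_left, hA.oplus_one⟩
  · exact ⟨_, _, _, _, _, Nat.succ_le_succ hA.two_le_left, hA.mediant hB h₃⟩

theorem foldl_fareyStep_shear (u : List LR) (a b c d : ℕ) :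
    u.foldl fareyStep ((a, a + b), (c, c + d)) =
      (u.foldl fareyStep ((a, b), (c, d))).map
        (fun v => (v.1, v.1 + v.2)) (fun v => (v.1, v.1 + v.2)) := by
  induction u generalizing a b c d with
  | nil => rfl
  | cons s u ih =>
    cases s
    · simp only [List.foldl_cons, fareyStep]
      rw [← ih, show a + b + (c + d) = a + c + (b + d) by omega]
    · simp only [List.foldl_cons, fareyStep]
      rw [← ih, show a + b + (c + d) = a + c + (b + d) by omega]

theorem value_cons_L_L (u : List LR) :
    value (.L :: .L :: u) =
      ((value (.L :: u)).1, (value (.L :: u)).1 + (value (.L :: u)).2) := by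
  have h := foldl_fareyStep_shear u 0 1 1 1
  have h' : finalPair (.L :: .L :: u) = u.foldl fareyStep ((0, 0 + 1), (1, 1 + 1)) := rfl
  simp only [value, h', h, Prod.map]
  exact Prod.ext rfl (by simp only [finalPair, List.tail_cons]; omega)

/-- The pair `v'` is the image of `v` under `x ↦ 1 / (2 - x)`. -/
def IsUpperImage (v v' : ℕ × ℕ) : Prop := v'.1 = v.2 ∧ v'.2 + v.1 = 2 * v.2

theorem foldl_fareyStep_upper (u : List LR) {f f' : (ℕ × ℕ) × (ℕ × ℕ)}
    (h₁ : IsUpperImage f.1 f'.1) (h₂ : IsUpperImage f.2 f'.2) :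
    IsUpperImage (u.foldl fareyStep f).1 (u.foldl fareyStep f').1 ∧
      IsUpperImage (u.foldl fareyStep f).2 (u.foldl fareyStep f').2 := by
  induction u generalizing f f' with
  | nil => exact ⟨h₁, h₂⟩
  | cons s u ih =>
    obtain ⟨⟨a, b⟩, c, d⟩ := f
    obtain ⟨⟨a', b'⟩, c', d'⟩ := f'
    have h₃ : IsUpperImage (a + c, b + d) (a' + c', b' + d') := by
      simp only [IsUpperImage] at *
      omega
    cases s
    · exact ih h₁ h₃
    · exact ih h₃ h₂

theorem value_cons_L_R (u : List LR) :
    IsUpperImage (value (.L :: u)) (value (.L :: .R :: u)) := by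
  have h := foldl_fareyStep_upper u (f := ((0, 1), (1, 1))) (f' := ((1, 2), (1, 1)))
    ⟨rfl, rfl⟩ ⟨rfl, rfl⟩
  have h₁ : finalPair (.L :: .R :: u) = u.foldl fareyStep ((1, 2), (1, 1)) := rfl
  have h₂ : finalPair (.L :: u) = u.foldl fareyStep ((0, 1), (1, 1)) := rfl
  simp only [IsUpperImage] at h
  simp only [value, h₁, h₂, IsUpperImage]
  omega

theorem value_pos_lt (u : List LR) :
    0 < (value (.L :: u)).1 ∧ (value (.L :: u)).1 < (value (.L :: u)).2 := by
  induction u with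
  | nil => decide
  | cons s u ih =>
    cases s
    · rw [value_cons_L_L]
      dsimp only
      omega
    · have h := value_cons_L_R u
      simp only [IsUpperImage] at h
      omega

/-- The degree sequences along a path `L u` and its image `L L u` are related as in `LowNode`
or, for fractions exceeding `1/2`, as in `HighNode`. -/
theorem exists_lowNode_or_highNode (u : List LR) :
    (∃ a b r J, LowNode a b r J (value (.L :: u)) (Dseq (.L :: u)) (Dseq (.L :: .L :: u))) ∨
      ((value (.L :: u)).2 < 2 * (value (.L :: u)).1 ∧
        ∃ a b s r J, 3 ≤ a ∧ HighNode a b s r J (value (.L :: u)) (Dseq (.L :: u))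
          (Dseq (.L :: .L :: u))) := by
  rcases u with _ | ⟨_ | _, u⟩
  · exact Or.inl ⟨_, _, _, _, lowNode_half⟩
  · have h : LowState ((0, 1), (1, 2)) ([1, 1], [2, 2, 2]) ([1, 1], [2, 3, 2, 3]) :=
      Or.inl ⟨rfl, rfl, rfl, _, _, _, lowNode_half⟩
    exact Or.inl (h.foldl u).mediant
  · have h : HighState ((1, 2), (1, 1)) ([2, 2, 2], [1, 1]) ([2, 3, 2, 3], [2, 2, 2]) :=
      Or.inl ⟨rfl, rfl, rfl, _, _, _, _, highNode_half⟩
    refine Or.inr ⟨?_, (h.foldl u).mediant⟩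
    have h₁ := value_cons_L_R u
    have h₂ := value_pos_lt u
    simp only [IsUpperImage] at h₁
    omega

/-- A fraction has at most one Farey path. -/
theorem value_injective {u u' : List LR} (h : value (.L :: u) = value (.L :: u')) :
    u = u' := by
  have hnil : value [.L] = (1, 2) := rfl
  induction u generalizing u' with
  | nil =>
    rcases u' with _ | ⟨_ | _, u'⟩
    · rfl
    · have := value_pos_lt u'
      rw [value_cons_L_L, hnil, Prod.ext_iff] at h
      dsimp only at h
      omega
    · have := value_pos_lt u'
      have h' := value_cons_L_R u'
      rw [← h, hnil] at h'
      simp only [IsUpperImage] at h'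
      omega
  | cons s u ih =>
    have hu := value_pos_lt u
    cases s
    · rw [value_cons_L_L] at h
      rcases u' with _ | ⟨_ | _, u'⟩
      · rw [hnil, Prod.ext_iff] at h
        dsimp only at h
        omega
      · rw [value_cons_L_L, Prod.ext_iff] at h
        dsimp only at h
        rw [ih (Prod.ext h.1 (by omega))]
      · have := value_pos_lt u'
        have h' := value_cons_L_R u'
        rw [← h] at h'
        simp only [IsUpperImage] at h'
        omega
    · have hR := value_cons_L_R u
      rw [h] at hR
      rcases u' with _ | ⟨_ | _, u'⟩
      · rw [hnil] at hR
        simp only [IsUpperImage] at hR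
        omega
      · have := value_pos_lt u'
        rw [value_cons_L_L] at hR
        simp only [IsUpperImage] at hR
        omega
      · have h' := value_cons_L_R u'
        simp only [IsUpperImage] at hR h'
        rw [ih (u' := u') (Prod.ext (by omega) (by omega))]

/-- The sum of `m log m` over the multiplicities `m` of the elements of a multiset. -/
noncomputable def multiplicityEntropy (M : Multiset ℕ) : ℝ :=
  ∑ k ∈ M.toFinset, (M.count k : ℝ) * Real.log (M.count k)

theorem multiplicityEntropy_add {M N : Multiset ℕ} (h : Disjoint M N) :
    multiplicityEntropy (M + N) = multiplicityEntropy M + multiplicityEntropy N := by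
  rw [Multiset.disjoint_left] at h
  rw [multiplicityEntropy, Multiset.toFinset_add, Finset.sum_union]
  · congr 1
    · refine Finset.sum_congr rfl fun k hk => ?_
      rw [Multiset.count_add, Multiset.count_eq_zero_of_notMem (h (Multiset.mem_toFinset.1 hk)),
        add_zero]
    · refine Finset.sum_congr rfl fun k hk => ?_
      rw [Multiset.count_add, Multiset.count_eq_zero_of_notMem
        (fun hM => h hM (Multiset.mem_toFinset.1 hk)), zero_add]
  · rw [Finset.disjoint_left]
    exact fun k hM hN => h (Multiset.mem_toFinset.1 hM) (Multiset.mem_toFinset.1 hN)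

theorem multiplicityEntropy_replicate (n k : ℕ) :
    multiplicityEntropy (Multiset.replicate n k) = n * Real.log n := by
  rcases n.eq_zero_or_pos with rfl | hn
  · simp [multiplicityEntropy]
  · have : (Multiset.replicate n k).toFinset = {k} := by
      ext i
      simp [hn.ne']
    rw [multiplicityEntropy, this, Finset.sum_singleton, Multiset.count_replicate_self]

theorem multiplicityEntropy_map_add_one (M : Multiset ℕ) :
    multiplicityEntropy (M.map (· + 1)) = multiplicityEntropy M := by
  have hinj : Function.Injective (· + 1 : ℕ → ℕ) := add_left_injective 1
  rw [multiplicityEntropy, Multiset.toFinset_map, Finset.sum_image hinj.injOn]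
  refine Finset.sum_congr rfl fun k _ => ?_
  rw [Multiset.count_map_eq_count' _ _ hinj]

theorem multiplicityEntropy_split {s r : ℕ} {J : Multiset ℕ} (hJ : ∀ k ∈ J, 4 ≤ k) :
    multiplicityEntropy (Multiset.replicate s 2 + Multiset.replicate r 3 + J) =
      s * Real.log s + r * Real.log r + multiplicityEntropy J := by
  rw [multiplicityEntropy_add, multiplicityEntropy_add, multiplicityEntropy_replicate,
    multiplicityEntropy_replicate]
  · rw [Multiset.disjoint_left]
    intro k hk hk'
    have h₁ := Multiset.eq_of_mem_replicate hk
    have h₂ := Multiset.eq_of_mem_replicate hk'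
    omega
  · rw [Multiset.disjoint_left]
    intro k hk hk'
    have := hJ k hk'
    rcases Multiset.mem_add.1 hk with hk | hk
    · have := Multiset.eq_of_mem_replicate hk
      omega
    · have := Multiset.eq_of_mem_replicate hk
      omega

theorem mul_log_div_eq (x : ℝ) {y : ℝ} (hy : y ≠ 0) :
    x * Real.log (x / y) = x * Real.log x - x * Real.log y := by
  rcases eq_or_ne x 0 with rfl | hx
  · simp
  · rw [Real.log_div hx hy]
    ring

theorem Sent_mul {w : List LR} {q : ℕ} {M : Multiset ℕ} (hq : (value w).2 = q)
    (hq0 : 0 < q) (hM : (degSeq w : Multiset ℕ) = M) (hcard : M.card = q) :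
    q * Sent w = q * Real.log q - multiplicityEntropy M := by
  have hq' : (q : ℝ) ≠ 0 := by positivity
  subst hM
  have hsum : ∑ k ∈ (degSeq w).toFinset, ((degSeq w).count k : ℝ) = q := by
    rw [← Nat.cast_sum, List.sum_toFinset_count_eq_length]
    exact_mod_cast hcard
  have hterm : ∀ k, (((degSeq w).count k : ℝ) / q) * Real.log ((degSeq w).count k / q) =
      ((degSeq w).count k * Real.log ((degSeq w).count k)
        - (degSeq w).count k * Real.log q) / q := fun k => by
    rw [← mul_log_div_eq _ hq']
    ring
  have hE : multiplicityEntropy (degSeq w) = ∑ k ∈ (degSeq w).toFinset,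
      ((degSeq w).count k : ℝ) * Real.log ((degSeq w).count k) := by
    simp only [multiplicityEntropy, Multiset.coe_count, List.toFinset_coe]
  simp only [Sent, hq, hterm]
  rw [← Finset.sum_div, Finset.sum_sub_distrib, ← Finset.sum_mul, hsum, hE]
  field_simp
  ring

/-- For `p/q ≤ 1/2`, the reduced entropy removes the contribution of degrees `2` and `3`. -/
theorem Hent_mul_of_le {w : List LR} {p q r : ℕ} {J : Multiset ℕ} (hv : value w = (p, q))
    (hp : 0 < p) (hr : r + 2 * p = q) (hJ : ∀ k ∈ J, 4 ≤ k) (hcard : J.card = p)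
    (hM : (degSeq w : Multiset ℕ) = Multiset.replicate p 2 + Multiset.replicate r 3 + J) :
    q * Hent w = p * Real.log p - multiplicityEntropy J := by
  have hq0 : 0 < q := by omega
  have hq' : (0 : ℝ) < q := by exact_mod_cast hq0
  have hS := Sent_mul (w := w) (q := q) (by rw [hv]) hq0 hM (by simp [hcard]; omega)
  rw [multiplicityEntropy_split hJ] at hS
  have hr' : (r : ℝ) + 2 * p = q := by exact_mod_cast hr
  have hx : (p : ℝ) / q ≤ 1 / 2 := by
    rw [div_le_div_iff₀ hq' two_pos]
    have : (0 : ℝ) ≤ r := by positivity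
    linarith
  have h1 : 1 - 2 * ((p : ℝ) / q) = r / q := by
    field_simp
    linarith
  have hlp := mul_log_div_eq (p : ℝ) hq'.ne'
  have hlr := mul_log_div_eq (r : ℝ) hq'.ne'
  simp only [Hent, hv, if_pos hx, h1]
  have hexp : q * (Sent w + 2 * (p / q) * Real.log (p / q) + r / q * Real.log (r / q)) =
      q * Sent w + 2 * (p * Real.log (p / q)) + r * Real.log (r / q) := by
    field_simp
  rw [hexp, hS, hlp, hlr, ← hr']
  ring

/-- For `p/q > 1/2`, the reduced entropy removes the contribution of degrees `2` and `3`. -/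
theorem Hent_mul_of_lt {w : List LR} {p q s r : ℕ} {J : Multiset ℕ} (hv : value w = (p, q))
    (hpq : q < 2 * p) (hq0 : 0 < q) (hs : s + p = q) (hr : r + q = 2 * p)
    (hJ : ∀ k ∈ J, 4 ≤ k) (hcard : J.card = s)
    (hM : (degSeq w : Multiset ℕ) = Multiset.replicate s 2 + Multiset.replicate r 3 + J) :
    q * Hent w = s * Real.log s - multiplicityEntropy J := by
  have hq' : (0 : ℝ) < q := by exact_mod_cast hq0
  have hS := Sent_mul (w := w) (q := q) (by rw [hv]) hq0 hM (by simp [hcard]; omega)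
  rw [multiplicityEntropy_split hJ] at hS
  have hr' : (r : ℝ) + q = 2 * p := by exact_mod_cast hr
  have hs' : (s : ℝ) + p = q := by exact_mod_cast hs
  have hx : ¬ (p : ℝ) / q ≤ 1 / 2 := by
    rw [div_le_div_iff₀ hq' two_pos]
    have : (q : ℝ) < 2 * p := by exact_mod_cast hpq
    linarith
  have h1 : 2 * ((p : ℝ) / q) - 1 = r / q := by
    field_simp
    linarith
  have h2 : 1 - (p : ℝ) / q = s / q := by
    field_simp
    linarith
  have hls := mul_log_div_eq (s : ℝ) hq'.ne'
  have hlr := mul_log_div_eq (r : ℝ) hq'.ne'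
  simp only [Hent, hv, if_neg hx, h1, h2]
  have hexp : q * (Sent w + 2 * (s / q) * Real.log (s / q) + r / q * Real.log (r / q)) =
      q * Sent w + 2 * (s * Real.log (s / q)) + r * Real.log (r / q) := by
    field_simp
  have hq2 : (q : ℝ) = r + 2 * s := by linarith
  rw [hexp, hS, hls, hlr]
  linear_combination Real.log q * hq2

theorem LowNode.Hent_eq {a b r p q : ℕ} {J : Multiset ℕ} {w w' : List LR}
    (hv : value w = (p, q)) (hv' : value w' = (p, p + q)) (hp : 0 < p)
    (h : LowNode a b r J (p, q) (Dseq w) (Dseq w')) :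
    q * Hent w = (p + q : ℕ) * Hent w' := by
  have ha := h.two_le_left
  have hb := h.two_le_right
  have hr := h.count_three
  have hc := h.card_inner
  dsimp only at hr hc
  have hK : ∀ k ∈ J + {a + b}, 4 ≤ k := by
    intro k hk
    simp only [Multiset.mem_add, Multiset.mem_singleton] at hk
    rcases hk with hk | rfl
    · exact h.four_le k hk
    · omega
  rw [Hent_mul_of_le (J := J + {a + b}) hv hp hr hK (by simp; omega)
      (by rw [degSeq, h.profile.coe_reduce, add_assoc]),
    Hent_mul_of_le (r := p + r) (J := (J + {a + b}).map (· + 1)) hv' hp (by omega)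
      (fun k hk => by
        obtain ⟨i, hi, rfl⟩ := Multiset.mem_map.1 hk
        exact (hK i hi).trans (Nat.le_succ i))
      (by simp; omega)
      (by
        rw [degSeq, h.profile_image.coe_reduce, Multiset.map_add, Multiset.map_singleton,
          add_assoc a b 1]
        abel),
    multiplicityEntropy_map_add_one]

theorem HighNode.Hent_eq {a b s r p q : ℕ} {J : Multiset ℕ} {w w' : List LR}
    (hv : value w = (p, q)) (hv' : value w' = (p, p + q)) (hpq : q < 2 * p) (hq : 0 < q)
    (ha : 3 ≤ a) (h : HighNode a b s r J (p, q) (Dseq w) (Dseq w')) :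
    q * Hent w = (p + q : ℕ) * Hent w' - p * Real.log p + s * Real.log s
      + r * Real.log r := by
  have hb := h.two_le_right
  have hs := h.count_two
  have hr := h.count_three
  have hc := h.card_inner
  dsimp only at hs hr hc
  have hsr : s + r = p := by omega
  have hK : ∀ k ∈ J + {a + b}, 5 ≤ k := by
    intro k hk
    simp only [Multiset.mem_add, Multiset.mem_singleton] at hk
    rcases hk with hk | rfl
    · exact h.five_le k hk
    · omega
  have hK' : ∀ k ∈ (J + {a + b}).map (· + 1), 6 ≤ k := fun k hk => by
    obtain ⟨i, hi, rfl⟩ := Multiset.mem_map.1 hk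
    exact Nat.succ_le_succ (hK i hi)
  rw [Hent_mul_of_lt (J := J + {a + b}) hv hpq hq hs hr
      (fun k hk => le_trans (by norm_num) (hK k hk)) (by simp; omega)
      (by rw [degSeq, h.profile.coe_reduce, add_assoc]),
    Hent_mul_of_le (r := s)
      (J := Multiset.replicate r 5 + (J + {a + b}).map (· + 1)) hv' (by omega) (by omega)
      (fun k hk => by
        rcases Multiset.mem_add.1 hk with hk | hk
        · have := Multiset.eq_of_mem_replicate hk
          omega
        · have := hK' k hk
          omega)
      (by simp; omega)
      (by
        rw [degSeq, h.profile_image.coe_reduce, Multiset.map_add, Multiset.map_singleton,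
          hsr, add_assoc a b 1]
        abel),
    multiplicityEntropy_add (M := Multiset.replicate r 5), multiplicityEntropy_replicate,
    multiplicityEntropy_map_add_one]
  · ring
  · rw [Multiset.disjoint_left]
    intro k hk hk'
    have := Multiset.eq_of_mem_replicate hk
    have := hK' k hk'
    omega

/-- for rational x = p/q ∈ (0,1) and F(x) = x/(1+x) = p/(p+q): if
x ≤ 1/2 then H(x) = (1+x)·H(F(x)); if x ≥ 1/2 then
H(x) = (1+x)·H(F(x)) − x·ln x + (2x−1)·ln(2x−1) + (1−x)·ln(1−x). -/
theorem statement13 (p q : ℕ) (hcop : Nat.Coprime p q) (hp : 0 < p) (hpq : p < q)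
    (w w' : List LR) (hw : IsFareyWord w) (hw' : IsFareyWord w')
    (hval : value w = (p, q)) (hval' : value w' = (p, p + q)) :
    (2 * p ≤ q → Hent w = (1 + (p : ℝ) / (q : ℝ)) * Hent w') ∧
    (q ≤ 2 * p → Hent w = (1 + (p : ℝ) / (q : ℝ)) * Hent w'
        - (p : ℝ) / (q : ℝ) * Real.log ((p : ℝ) / (q : ℝ))
        + (2 * ((p : ℝ) / (q : ℝ)) - 1) * Real.log (2 * ((p : ℝ) / (q : ℝ)) - 1)
        + (1 - (p : ℝ) / (q : ℝ)) * Real.log (1 - (p : ℝ) / (q : ℝ))) := by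
  obtain ⟨u, rfl⟩ : ∃ u, w = .L :: u := ⟨w.tail, List.eq_cons_of_mem_head? hw⟩
  obtain ⟨u', rfl⟩ : ∃ u', w' = .L :: u' := ⟨w'.tail, List.eq_cons_of_mem_head? hw'⟩
  obtain rfl : u' = .L :: u := value_injective (by rw [hval', value_cons_L_L, hval])
  have hq : (0 : ℝ) < q := by exact_mod_cast hp.trans hpq
  have hnode := exists_lowNode_or_highNode u
  rw [hval] at hnode
  rcases hnode with ⟨_, _, r, _, h⟩ | ⟨hlt, _, _, s, r, _, ha, h⟩
  · have hH := h.Hent_eq hval hval' hp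
    push_cast at hH
    have hmain : Hent (.L :: u) = (1 + (p : ℝ) / q) * Hent (.L :: .L :: u) := by
      field_simp
      linarith
    refine ⟨fun _ => hmain, fun hle => ?_⟩
    have hr := h.count_three
    dsimp only at hr
    have hq2 : (q : ℝ) = 2 * p := by exact_mod_cast (show q = 2 * p by omega)
    have hx : (p : ℝ) / q = 1 / 2 := by
      rw [div_eq_div_iff hq.ne' two_ne_zero]
      linarith
    rw [hmain, hx]
    norm_num
  · have hs := h.count_two
    have hr := h.count_three
    dsimp only at hs hr hlt
    have hH := h.Hent_eq hval hval' hlt (hp.trans hpq) ha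
    push_cast at hH
    refine ⟨fun hle' => absurd hlt (not_lt.2 hle'), fun _ => ?_⟩
    have hr' : (r : ℝ) + q = 2 * p := by exact_mod_cast hr
    have hs' : (s : ℝ) + p = q := by exact_mod_cast hs
    have h1 : 2 * ((p : ℝ) / q) - 1 = r / q := by
      field_simp
      linarith
    have h2 : 1 - (p : ℝ) / q = s / q := by
      field_simp
      linarith
    have hlp := mul_log_div_eq (p : ℝ) hq.ne'
    have hls := mul_log_div_eq (s : ℝ) hq.ne'
    have hlr := mul_log_div_eq (r : ℝ) hq.ne'
    rw [h1, h2]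
    apply mul_left_cancel₀ hq.ne'
    have hexp : q * ((1 + p / q) * Hent (.L :: .L :: u) - p / q * Real.log (p / q)
        + r / q * Real.log (r / q) + s / q * Real.log (s / q)) =
        (p + q) * Hent (.L :: .L :: u) - p * Real.log (p / q) + r * Real.log (r / q)
          + s * Real.log (s / q) := by
      field_simp
      ring
    rw [hexp, hH, hlp, hls, hlr]
    linear_combination Real.log q * (hr' + hs')
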